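/- arXiv:1710.10052 — 2 statements merged into one kernel-verified Lean document; each statement's English description precedes it below -/
import Mathlib

section
/- (Steiner's Theorem.) Define, for s ∈ ℝ, A(s) := ∫₀^{2π} ∫₀^{π} [((H+s) + ðð̄H)² − (ð²H)(ð̄²H)] sinθ dθ dφ (the area of the surface with stutzfunction H + s), A := A(0), and M := ∫₀^{2π} ∫₀^{π} (H + ðð̄H) sinθ dθ dφ (the integral of mean curvature). Then for all s: A(s) = A + 2sM + 4πs². Moreover, for any V₀ ∈ ℝ, the function V(s) := V₀ + ∫₀^{s} A(u) du satisfies V(s) = V₀ + sA + s²M + (4/3)πs³. -/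
noncomputable section

/-- The unit radial vector `ℓ(θ,φ) = (sinθ cosφ, sinθ sinφ, cosθ)` in `ℝ³`. -/
def sphL (θ φ : ℝ) : Fin 3 → ℝ :=
  ![Real.sin θ * Real.cos φ, Real.sin θ * Real.sin φ, Real.cos θ]

/-- The complex vector `m(θ,φ) = (1/√2)(cosθcosφ − i sinφ, cosθsinφ + i cosφ, −sinθ)` in `ℂ³`. -/
def sphM (θ φ : ℝ) : Fin 3 → ℂ :=
  ![(Real.sqrt 2 : ℂ)⁻¹ *
      (Complex.ofReal (Real.cos θ * Real.cos φ) - Complex.I * Complex.ofReal (Real.sin φ)),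
    (Real.sqrt 2 : ℂ)⁻¹ *
      (Complex.ofReal (Real.cos θ * Real.sin φ) + Complex.I * Complex.ofReal (Real.cos φ)),
    (Real.sqrt 2 : ℂ)⁻¹ * (-Complex.ofReal (Real.sin θ))]

/-- The Newman–Penrose operator `ð` acting on a function `η(θ,φ)` of spin weight `s`:
`ðη = (1/√2)(sinθ)^s (∂_θ + (i/sinθ)∂_φ)((sinθ)^{-s} η)`. -/
def eth (s : ℤ) (η : ℝ → ℝ → ℂ) (θ φ : ℝ) : ℂ :=
  (Real.sqrt 2 : ℂ)⁻¹ * (Real.sin θ : ℂ) ^ s *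
    (deriv (fun t => (Real.sin t : ℂ) ^ (-s) * η t φ) θ +
      Complex.I / (Real.sin θ : ℂ) * deriv (fun p => (Real.sin θ : ℂ) ^ (-s) * η θ p) φ)

/-- The operator `ð̄` acting on a function `η(θ,φ)` of spin weight `s`:
`ð̄η = (1/√2)(sinθ)^{-s} (∂_θ − (i/sinθ)∂_φ)((sinθ)^{s} η)`. -/
def ethbar (s : ℤ) (η : ℝ → ℝ → ℂ) (θ φ : ℝ) : ℂ :=
  (Real.sqrt 2 : ℂ)⁻¹ * (Real.sin θ : ℂ) ^ (-s) *
    (deriv (fun t => (Real.sin t : ℂ) ^ s * η t φ) θ -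
      Complex.I / (Real.sin θ : ℂ) * deriv (fun p => (Real.sin θ : ℂ) ^ s * η θ p) φ)

/-- The stutzfunction as a (complex-valued) function of the spherical coordinates:
`H(θ,φ) = H(ℓ(θ,φ))`. -/
def HC (H : (Fin 3 → ℝ) → ℝ) (θ φ : ℝ) : ℂ := (H (sphL θ φ) : ℂ)

/-- `ðH` of the (spin-weight 0) stutzfunction. -/
def ethH (H : (Fin 3 → ℝ) → ℝ) : ℝ → ℝ → ℂ := eth 0 (HC H)

/-- `ð̄H` (spin weight `-1`). -/
def ethbarH (H : (Fin 3 → ℝ) → ℝ) : ℝ → ℝ → ℂ := ethbar 0 (HC H)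

/-- `ð²H`: `ð` (at spin weight 1) applied to `ðH`. -/
def eth2H (H : (Fin 3 → ℝ) → ℝ) : ℝ → ℝ → ℂ := eth 1 (ethH H)

/-- `ð̄²H`: `ð̄` (at spin weight `-1`) applied to `ð̄H`. -/
def ethbar2H (H : (Fin 3 → ℝ) → ℝ) : ℝ → ℝ → ℂ := ethbar (-1) (ethbarH H)

/-- `ðð̄H`: `ð` (at spin weight `-1`) applied to `ð̄H`; it is real. -/
def ethethbarH (H : (Fin 3 → ℝ) → ℝ) : ℝ → ℝ → ℂ := eth (-1) (ethbarH H)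

/-- The parametrised surface `x(θ,φ) = H ℓ + (ð̄H) m + (ðH) conj(m)`; this vector is real,
and we record its (real) components. -/
def surf (H : (Fin 3 → ℝ) → ℝ) (θ φ : ℝ) : Fin 3 → ℝ := fun i =>
  (HC H θ φ * (sphL θ φ i : ℂ) + ethbarH H θ φ * sphM θ φ i +
    ethH H θ φ * (starRingEnd ℂ) (sphM θ φ i)).re

/-- `J(θ,φ) = (H + ðð̄H)² − (ð²H)(ð̄²H)`; this quantity is real and we take its real part. -/
def Jfun (H : (Fin 3 → ℝ) → ℝ) (θ φ : ℝ) : ℝ :=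
  ((HC H θ φ + ethethbarH H θ φ) ^ 2 - eth2H H θ φ * ethbar2H H θ φ).re

/-- The Euclidean norm on `ℝ³`. -/
def norm3 (v : Fin 3 → ℝ) : ℝ := Real.sqrt (v 0 ^ 2 + v 1 ^ 2 + v 2 ^ 2)

/-- The Euclidean dot product on `ℝ³`. -/
def dot3 (u v : Fin 3 → ℝ) : ℝ := ∑ i, u i * v i

/-- The area of the parallel surface with stutzfunction `H + s`:
`A(s) = ∫₀^{2π}∫₀^{π} [((H+s) + ðð̄H)² − (ð²H)(ð̄²H)] sinθ dθ dφ`. -/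
def Asteiner (H : (Fin 3 → ℝ) → ℝ) (s : ℝ) : ℝ :=
  ∫ φ in (0:ℝ)..(2 * Real.pi), ∫ θ in (0:ℝ)..Real.pi,
    (((HC H θ φ + (s : ℂ) + ethethbarH H θ φ) ^ 2 -
      eth2H H θ φ * ethbar2H H θ φ).re) * Real.sin θ

/-- The integral of mean curvature `M = ∫₀^{2π}∫₀^{π} (H + ðð̄H) sinθ dθ dφ`. -/
def Msteiner (H : (Fin 3 → ℝ) → ℝ) : ℝ :=
  ∫ φ in (0:ℝ)..(2 * Real.pi), ∫ θ in (0:ℝ)..Real.pi,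
    (HC H θ φ + ethethbarH H θ φ).re * Real.sin θ

/-!
The integrand of `A(s)` is pointwise the quadratic polynomial `J + 2s(H + ðð̄H) + s²` in `s`, so the
formula for `A(s)` follows by integrating over the sphere, of area `4π`, once `J sinθ` and
`(H + ðð̄H) sinθ` are known to be integrable up to the poles, where the coordinate expressions of
`ð` and `ð̄` are singular. In terms of the orthonormal frame `e_θ, e_φ` and the derivatives of `H`
in the ambient space, the singular terms of `ð²H` and `ðð̄H` cancel: both are contractions of the
Hessian of `H` on the sphere with the frame, and so extend continuously to all values of the
coordinates.
-/

section Calculus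

variable {E : Type*} [NormedAddCommGroup E] [NormedSpace ℝ E]

theorem integral_integral_add_of_continuous {f g : ℝ → ℝ → E} (hf : Continuous f.uncurry)
    (hg : Continuous g.uncurry) (a b c d : ℝ) :
    ∫ x in a..b, ∫ y in c..d, (f x y + g x y) =
      (∫ x in a..b, ∫ y in c..d, f x y) + ∫ x in a..b, ∫ y in c..d, g x y := by
  have inner_add (x : ℝ) : ∫ y in c..d, (f x y + g x y) =
      (∫ y in c..d, f x y) + ∫ y in c..d, g x y :=
    intervalIntegral.integral_add ((hf.uncurry_left x).intervalIntegrable c d)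
      ((hg.uncurry_left x).intervalIntegrable c d)
  simp only [inner_add]
  exact intervalIntegral.integral_add
    ((intervalIntegral.continuous_parametric_intervalIntegral_of_continuous' hf
      c d).intervalIntegrable a b)
    ((intervalIntegral.continuous_parametric_intervalIntegral_of_continuous' hg
      c d).intervalIntegrable a b)

theorem integral_integral_sin :
    ∫ _ in (0 : ℝ)..(2 * Real.pi), ∫ θ in (0 : ℝ)..Real.pi, Real.sin θ = 4 * Real.pi := by
  simp only [integral_sin, Real.cos_zero, Real.cos_pi, intervalIntegral.integral_const, smul_eq_mul]
  ring

theorem integral_quadratic (c₀ c₁ c₂ a b : ℝ) :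
    ∫ u in a..b, (c₀ + c₁ * u + c₂ * u ^ 2) =
      c₀ * (b - a) + c₁ * (b ^ 2 - a ^ 2) / 2 + c₂ * (b ^ 3 - a ^ 3) / 3 := by
  have integrable {f : ℝ → ℝ} (hf : Continuous f) :
      IntervalIntegrable f MeasureTheory.volume a b :=
    hf.intervalIntegrable a b
  rw [intervalIntegral.integral_add (integrable (by fun_prop)) (integrable (by fun_prop)),
    intervalIntegral.integral_add (integrable (by fun_prop)) (integrable (by fun_prop)),
    intervalIntegral.integral_const_mul, intervalIntegral.integral_const_mul,
    intervalIntegral.integral_const, integral_id, integral_pow, smul_eq_mul]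
  push_cast
  ring

theorem contDiffAt_ofReal_comp {f : E → ℝ} {n : WithTop ℕ∞} {x : E} (hf : ContDiffAt ℝ n f x) :
    ContDiffAt ℝ n (fun y => (f y : ℂ)) x :=
  Complex.ofRealCLM.contDiff.contDiffAt.comp x hf

theorem continuous_mul_of_eq_of_ne_zero {X R : Type*} [TopologicalSpace X] [TopologicalSpace R]
    [MulZeroClass R] [ContinuousMul R] {f g w : X → R} (hg : Continuous g) (hw : Continuous w)
    (h : ∀ x, w x ≠ 0 → f x = g x) : Continuous fun x => f x * w x := by
  have h_eq : (fun x => f x * w x) = fun x => g x * w x := by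
    funext x
    by_cases hx : w x = 0
    · rw [hx, mul_zero, mul_zero]
    · rw [h x hx]
  rw [h_eq]
  exact hg.mul hw

end Calculus

section Eth

open Complex ComplexConjugate

theorem ethbar_eq_conj_eth (s : ℤ) (η : ℝ → ℝ → ℂ) (θ φ : ℝ) :
    ethbar s η θ φ = conj (eth (-s) (fun t p => conj (η t p)) θ φ) := by
  have conj_deriv (f : ℝ → ℂ) (x : ℝ) : conj (deriv f x) = deriv (fun y => conj (f y)) x :=
    deriv.star.symm
  simp only [eth, ethbar, map_mul, map_add, map_div₀, map_inv₀, map_zpow₀, conj_deriv, conj_ofReal,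
    conj_conj, conj_I, neg_neg, neg_div, neg_mul, sub_eq_add_neg]

theorem eth_const_mul (s : ℤ) (c : ℂ) (η : ℝ → ℝ → ℂ) (θ φ : ℝ) :
    eth s (fun t p => c * η t p) θ φ = c * eth s η θ φ := by
  simp only [eth, mul_left_comm _ c, deriv_const_mul_field]
  ring

theorem eth_congr_of_sin_ne_zero {η ζ : ℝ → ℝ → ℂ}
    (h : ∀ t p, Real.sin t ≠ 0 → η t p = ζ t p) (s : ℤ) {θ : ℝ} (hθ : Real.sin θ ≠ 0) (φ : ℝ) :
    eth s η θ φ = eth s ζ θ φ := by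
  have h_near : (fun t => (Real.sin t : ℂ) ^ (-s) * η t φ) =ᶠ[nhds θ]
      fun t => (Real.sin t : ℂ) ^ (-s) * ζ t φ := by
    filter_upwards [Real.continuous_sin.continuousAt.eventually_ne hθ] with t ht
    rw [h t φ ht]
  simp only [eth, h_near.deriv_eq, h θ _ hθ]

theorem hasDerivAt_ofReal_sin_zpow (n : ℤ) {θ : ℝ} (hθ : Real.sin θ ≠ 0) :
    HasDerivAt (fun t => (Real.sin t : ℂ) ^ n)
      (n * (Real.sin θ : ℂ) ^ n * (Real.cos θ / Real.sin θ)) θ := by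
  have hθ' : (Real.sin θ : ℂ) ≠ 0 := ofReal_ne_zero.mpr hθ
  refine ((hasDerivAt_zpow n (Real.sin θ : ℂ) (Or.inl hθ')).comp θ
    (Real.hasDerivAt_sin θ).ofReal_comp).congr_deriv ?_
  rw [zpow_sub_one₀ hθ']
  ring

theorem eth_eq_deriv_sub_cot_mul (s : ℤ) {η : ℝ → ℝ → ℂ} {θ φ : ℝ} (hθ : Real.sin θ ≠ 0)
    (hη : DifferentiableAt ℝ (fun t => η t φ) θ) :
    eth s η θ φ = (Real.sqrt 2 : ℂ)⁻¹ *
      (deriv (fun t => η t φ) θ - s * (Real.cos θ / Real.sin θ) * η θ φ +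
        I / Real.sin θ * deriv (fun p => η θ p) φ) := by
  have hpow : (Real.sin θ : ℂ) ^ s ≠ 0 := zpow_ne_zero s (ofReal_ne_zero.mpr hθ)
  rw [eth, ((hasDerivAt_ofReal_sin_zpow (-s) hθ).fun_mul hη.hasDerivAt).deriv,
    deriv_const_mul_field, zpow_neg, Int.cast_neg]
  field_simp
  ring

theorem ethbarH_eq_conj_ethH (H : (Fin 3 → ℝ) → ℝ) (θ φ : ℝ) :
    ethbarH H θ φ = conj (ethH H θ φ) := by
  have conj_HC : (fun t p => conj (HC H t p)) = HC H := by
    funext t p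
    exact conj_ofReal _
  rw [ethbarH, ethH, ethbar_eq_conj_eth, conj_HC, neg_zero]

theorem ethbar2H_eq_conj_eth2H (H : (Fin 3 → ℝ) → ℝ) (θ φ : ℝ) :
    ethbar2H H θ φ = conj (eth2H H θ φ) := by
  simp only [ethbar2H, eth2H, ethbar_eq_conj_eth, ethbarH_eq_conj_ethH, conj_conj, neg_neg]

end Eth

section Frame

/-- The unit vector `e_θ = ∂ℓ/∂θ` of the orthonormal frame `ℓ, e_θ, e_φ`. -/
def unitTheta (θ φ : ℝ) : Fin 3 → ℝ :=
  ![Real.cos θ * Real.cos φ, Real.cos θ * Real.sin φ, -Real.sin θ]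

/-- The unit vector `e_φ` of the orthonormal frame `ℓ, e_θ, e_φ`, with `∂ℓ/∂φ = sinθ e_φ`. Unlike
`∂ℓ/∂φ` it does not vanish at the poles. -/
def unitPhi (φ : ℝ) : Fin 3 → ℝ :=
  ![-Real.sin φ, Real.cos φ, 0]

theorem sphL_ne_zero (θ φ : ℝ) : sphL θ φ ≠ 0 := by
  have norm_sq : sphL θ φ 0 ^ 2 + sphL θ φ 1 ^ 2 + sphL θ φ 2 ^ 2 = 1 := by
    simp only [sphL, Matrix.cons_val]
    linear_combination
      Real.sin θ ^ 2 * Real.sin_sq_add_cos_sq φ + Real.sin_sq_add_cos_sq θ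
  intro h
  simp [h] at norm_sq

theorem hasDerivAt_sphL_theta (θ φ : ℝ) :
    HasDerivAt (fun t => sphL t φ) (unitTheta θ φ) θ := by
  refine hasDerivAt_pi.2 fun i => ?_
  fin_cases i
  · exact (Real.hasDerivAt_sin θ).mul_const _
  · exact (Real.hasDerivAt_sin θ).mul_const _
  · exact Real.hasDerivAt_cos θ

theorem hasDerivAt_sphL_phi (θ φ : ℝ) :
    HasDerivAt (fun p => sphL θ p) (Real.sin θ • unitPhi φ) φ := by
  refine hasDerivAt_pi.2 fun i => ?_
  fin_cases i
  · exact (Real.hasDerivAt_cos φ).const_mul _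
  · exact (Real.hasDerivAt_sin φ).const_mul _
  · simpa [sphL, unitPhi] using hasDerivAt_const φ (Real.cos θ)

theorem hasDerivAt_unitTheta_theta (θ φ : ℝ) :
    HasDerivAt (fun t => unitTheta t φ) (-sphL θ φ) θ := by
  refine hasDerivAt_pi.2 fun i => ?_
  fin_cases i
  · simpa [sphL, unitTheta] using (Real.hasDerivAt_cos θ).mul_const (Real.cos φ)
  · simpa [sphL, unitTheta] using (Real.hasDerivAt_cos θ).mul_const (Real.sin φ)
  · exact (Real.hasDerivAt_sin θ).fun_neg

theorem hasDerivAt_unitTheta_phi (θ φ : ℝ) :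
    HasDerivAt (fun p => unitTheta θ p) (Real.cos θ • unitPhi φ) φ := by
  refine hasDerivAt_pi.2 fun i => ?_
  fin_cases i
  · exact (Real.hasDerivAt_cos φ).const_mul _
  · exact (Real.hasDerivAt_sin φ).const_mul _
  · simpa [unitTheta, unitPhi] using hasDerivAt_const φ (-Real.sin θ)

theorem cos_smul_unitTheta_add_sin_smul_sphL (θ φ : ℝ) :
    Real.cos θ • unitTheta θ φ + Real.sin θ • sphL θ φ = ![Real.cos φ, Real.sin φ, 0] := by
  ext i
  fin_cases i
  · change Real.cos θ * (Real.cos θ * Real.cos φ) + Real.sin θ * (Real.sin θ * Real.cos φ) =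
      Real.cos φ
    linear_combination Real.cos φ * Real.sin_sq_add_cos_sq θ
  · change Real.cos θ * (Real.cos θ * Real.sin φ) + Real.sin θ * (Real.sin θ * Real.sin φ) =
      Real.sin φ
    linear_combination Real.sin φ * Real.sin_sq_add_cos_sq θ
  · change Real.cos θ * -Real.sin θ + Real.sin θ * Real.cos θ = 0
    ring

theorem hasDerivAt_unitPhi (θ φ : ℝ) :
    HasDerivAt unitPhi (-(Real.cos θ • unitTheta θ φ + Real.sin θ • sphL θ φ)) φ := by
  rw [cos_smul_unitTheta_add_sin_smul_sphL]
  refine hasDerivAt_pi.2 fun i => ?_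
  fin_cases i
  · exact (Real.hasDerivAt_sin φ).fun_neg
  · exact Real.hasDerivAt_cos φ
  · simpa [unitPhi] using hasDerivAt_const φ (0 : ℝ)

theorem continuous_sphL : Continuous fun x : ℝ × ℝ => sphL x.1 x.2 := by
  unfold sphL
  fun_prop

theorem continuous_unitTheta : Continuous fun x : ℝ × ℝ => unitTheta x.1 x.2 := by
  unfold unitTheta
  fun_prop

theorem continuous_unitPhi : Continuous unitPhi :=
  continuous_iff_continuousAt.2 fun φ => (hasDerivAt_unitPhi 0 φ).continuousAt

end Frame

section SpinDerivatives

open Complex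

/-- The derivative of `F` at `ℓ(θ,φ)` along the complex tangent vector `e_θ + n i e_φ`. For
`n = 1, -1` it is the smooth form, of spin weight `n`, of `√2 ðF` and `√2 ð̄F` respectively. -/
def spinGrad (F : (Fin 3 → ℝ) → ℂ) (n : ℤ) (θ φ : ℝ) : ℂ :=
  fderiv ℝ F (sphL θ φ) (unitTheta θ φ) + n * I * fderiv ℝ F (sphL θ φ) (unitPhi φ)

/-- The Hessian on the unit sphere of the restriction of `F`, evaluated on the complex tangent
vectors `u = e_θ + i e_φ` and `v = e_θ + n i e_φ`. The Hessian of the sphere is the ambient one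
minus `⟨u, v⟩` times the radial derivative, where `⟨·, ·⟩` is complex bilinear, so that
`⟨u, v⟩ = 1 - n`. For `n = 1, -1` this is the smooth form of `2 ð²F` and `2 ðð̄F` respectively. -/
def spinHess (F : (Fin 3 → ℝ) → ℂ) (n : ℤ) (θ φ : ℝ) : ℂ :=
  fderiv ℝ (fderiv ℝ F) (sphL θ φ) (unitTheta θ φ) (unitTheta θ φ) +
    n * I * fderiv ℝ (fderiv ℝ F) (sphL θ φ) (unitTheta θ φ) (unitPhi φ) +
    I * fderiv ℝ (fderiv ℝ F) (sphL θ φ) (unitPhi φ) (unitTheta θ φ) -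
    n * fderiv ℝ (fderiv ℝ F) (sphL θ φ) (unitPhi φ) (unitPhi φ) -
    (1 - n) * fderiv ℝ F (sphL θ φ) (sphL θ φ)

variable {F : (Fin 3 → ℝ) → ℂ} {θ φ : ℝ}

theorem hasDerivAt_comp_sphL_theta (hF : DifferentiableAt ℝ F (sphL θ φ)) :
    HasDerivAt (fun t => F (sphL t φ)) (fderiv ℝ F (sphL θ φ) (unitTheta θ φ)) θ :=
  hF.hasFDerivAt.comp_hasDerivAt θ (hasDerivAt_sphL_theta θ φ)

theorem hasDerivAt_comp_sphL_phi (hF : DifferentiableAt ℝ F (sphL θ φ)) :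
    HasDerivAt (fun p => F (sphL θ p))
      (Real.sin θ * fderiv ℝ F (sphL θ φ) (unitPhi φ)) φ := by
  refine (hF.hasFDerivAt.comp_hasDerivAt φ (hasDerivAt_sphL_phi θ φ)).congr_deriv ?_
  rw [map_smul, real_smul]

theorem eth_zero_comp_sphL (hF : DifferentiableAt ℝ F (sphL θ φ)) (hθ : Real.sin θ ≠ 0) :
    eth 0 (fun t p => F (sphL t p)) θ φ = (Real.sqrt 2 : ℂ)⁻¹ * spinGrad F 1 θ φ := by
  have hθ' : (Real.sin θ : ℂ) ≠ 0 := ofReal_ne_zero.mpr hθ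
  simp only [eth, neg_zero, zpow_zero, one_mul, mul_one, spinGrad, Int.cast_one,
    (hasDerivAt_comp_sphL_theta hF).deriv, (hasDerivAt_comp_sphL_phi hF).deriv]
  field_simp

theorem ethbar_zero_comp_sphL (hF : DifferentiableAt ℝ F (sphL θ φ)) (hθ : Real.sin θ ≠ 0) :
    ethbar 0 (fun t p => F (sphL t p)) θ φ = (Real.sqrt 2 : ℂ)⁻¹ * spinGrad F (-1) θ φ := by
  have hθ' : (Real.sin θ : ℂ) ≠ 0 := ofReal_ne_zero.mpr hθ
  simp only [ethbar, neg_zero, zpow_zero, one_mul, mul_one, spinGrad, Int.cast_neg, Int.cast_one,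
    (hasDerivAt_comp_sphL_theta hF).deriv, (hasDerivAt_comp_sphL_phi hF).deriv]
  field_simp
  ring

theorem hasDerivAt_spinGrad_theta (n : ℤ) (hF : DifferentiableAt ℝ (fderiv ℝ F) (sphL θ φ)) :
    HasDerivAt (fun t => spinGrad F n t φ)
      (fderiv ℝ (fderiv ℝ F) (sphL θ φ) (unitTheta θ φ) (unitTheta θ φ) -
        fderiv ℝ F (sphL θ φ) (sphL θ φ) +
        n * I * fderiv ℝ (fderiv ℝ F) (sphL θ φ) (unitTheta θ φ) (unitPhi φ)) θ := by
  have hDF := hF.hasFDerivAt.comp_hasDerivAt θ (hasDerivAt_sphL_theta θ φ)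
  refine ((hDF.clm_apply (hasDerivAt_unitTheta_theta θ φ)).add
    ((hDF.clm_apply (hasDerivAt_const θ (unitPhi φ))).const_mul (n * I))).congr_deriv ?_
  simp only [Function.comp_apply, map_neg, map_zero]
  ring

theorem hasDerivAt_spinGrad_phi (n : ℤ) (hF : DifferentiableAt ℝ (fderiv ℝ F) (sphL θ φ)) :
    HasDerivAt (fun p => spinGrad F n θ p)
      (Real.sin θ * fderiv ℝ (fderiv ℝ F) (sphL θ φ) (unitPhi φ) (unitTheta θ φ) +
        Real.cos θ * fderiv ℝ F (sphL θ φ) (unitPhi φ) +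
        n * I * (Real.sin θ * fderiv ℝ (fderiv ℝ F) (sphL θ φ) (unitPhi φ) (unitPhi φ) -
          (Real.cos θ * fderiv ℝ F (sphL θ φ) (unitTheta θ φ) +
            Real.sin θ * fderiv ℝ F (sphL θ φ) (sphL θ φ)))) φ := by
  have hDF := hF.hasFDerivAt.comp_hasDerivAt φ (hasDerivAt_sphL_phi θ φ)
  refine ((hDF.clm_apply (hasDerivAt_unitTheta_phi θ φ)).add
    ((hDF.clm_apply (hasDerivAt_unitPhi θ φ)).const_mul (n * I))).congr_deriv ?_
  simp only [Function.comp_apply, map_smul, map_neg, map_add, smul_apply,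
    real_smul]
  ring

theorem eth_spinGrad {n : ℤ} (hn : n ^ 2 = 1) (hF : DifferentiableAt ℝ (fderiv ℝ F) (sphL θ φ))
    (hθ : Real.sin θ ≠ 0) :
    eth n (spinGrad F n) θ φ = (Real.sqrt 2 : ℂ)⁻¹ * spinHess F n θ φ := by
  have hθ' : (Real.sin θ : ℂ) ≠ 0 := ofReal_ne_zero.mpr hθ
  have hn' : (n : ℂ) ^ 2 = 1 := mod_cast hn
  have h_theta := hasDerivAt_spinGrad_theta n hF
  rw [eth_eq_deriv_sub_cot_mul n hθ h_theta.differentiableAt, h_theta.deriv,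
    (hasDerivAt_spinGrad_phi n hF).deriv, spinGrad, spinHess]
  congr 1
  field_simp
  -- The terms in `cos θ` cancel since `n ^ 2 = 1` and `I ^ 2 = -1`.
  linear_combination
    (n * (Real.sin θ * fderiv ℝ (fderiv ℝ F) (sphL θ φ) (unitPhi φ) (unitPhi φ) -
      Real.cos θ * fderiv ℝ F (sphL θ φ) (unitTheta θ φ) -
      Real.sin θ * fderiv ℝ F (sphL θ φ) (sphL θ φ))) * I_sq -
    Real.cos θ * I * fderiv ℝ F (sphL θ φ) (unitPhi φ) * hn'

theorem eth_eq_spinHess_div_two {n : ℤ} (hn : n ^ 2 = 1)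
    (hF : DifferentiableAt ℝ (fderiv ℝ F) (sphL θ φ)) (hθ : Real.sin θ ≠ 0) {η : ℝ → ℝ → ℂ}
    (hη : ∀ t p, Real.sin t ≠ 0 → η t p = (Real.sqrt 2 : ℂ)⁻¹ * spinGrad F n t p) :
    eth n η θ φ = spinHess F n θ φ / 2 := by
  have sqrt_two_sq : (Real.sqrt 2 : ℂ) * Real.sqrt 2 = 2 := by
    rw [← ofReal_mul, Real.mul_self_sqrt zero_le_two, ofReal_ofNat]
  rw [eth_congr_of_sin_ne_zero hη n hθ, eth_const_mul, eth_spinGrad hn hF hθ, ← mul_assoc,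
    ← mul_inv, sqrt_two_sq, div_eq_inv_mul]

theorem continuous_spinHess (hF : ∀ θ φ, ContDiffAt ℝ 2 F (sphL θ φ)) (n : ℤ) :
    Continuous fun x : ℝ × ℝ => spinHess F n x.1 x.2 := by
  have hL := continuous_sphL
  have h_theta := continuous_unitTheta
  have h_phi := continuous_unitPhi
  have hDF (θ φ : ℝ) : ContDiffAt ℝ 1 (fderiv ℝ F) (sphL θ φ) :=
    (hF θ φ).fderiv_right (by norm_num)
  have h_grad : Continuous fun x : ℝ × ℝ => fderiv ℝ F (sphL x.1 x.2) :=
    continuous_iff_continuousAt.2 fun x =>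
      (hDF x.1 x.2).continuousAt.tendsto.comp (hL.tendsto x)
  have h_hess : Continuous fun x : ℝ × ℝ => fderiv ℝ (fderiv ℝ F) (sphL x.1 x.2) :=
    continuous_iff_continuousAt.2 fun x =>
      ((hDF x.1 x.2).continuousAt_fderiv one_ne_zero).tendsto.comp (hL.tendsto x)
  unfold spinHess
  fun_prop

end SpinDerivatives

section Stutzfunction

open Complex ComplexConjugate

variable {H : (Fin 3 → ℝ) → ℝ}

theorem eth2H_eq_spinHess_div_two (hH : ∀ θ φ, ContDiffAt ℝ 2 H (sphL θ φ)) {θ : ℝ}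
    (hθ : Real.sin θ ≠ 0) (φ : ℝ) :
    eth2H H θ φ = spinHess (fun v => (H v : ℂ)) 1 θ φ / 2 := by
  have hF (t p : ℝ) := contDiffAt_ofReal_comp (hH t p)
  have hDF := ((hF θ φ).fderiv_right (m := 1) (by norm_num)).differentiableAt one_ne_zero
  have ethH_eq (t p : ℝ) (ht : Real.sin t ≠ 0) :
      ethH H t p = (Real.sqrt 2 : ℂ)⁻¹ * spinGrad (fun v => (H v : ℂ)) 1 t p :=
    eth_zero_comp_sphL (F := fun v => (H v : ℂ)) ((hF t p).differentiableAt two_ne_zero) ht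
  exact eth_eq_spinHess_div_two (by norm_num) hDF hθ ethH_eq

theorem ethethbarH_eq_spinHess_div_two (hH : ∀ θ φ, ContDiffAt ℝ 2 H (sphL θ φ)) {θ : ℝ}
    (hθ : Real.sin θ ≠ 0) (φ : ℝ) :
    ethethbarH H θ φ = spinHess (fun v => (H v : ℂ)) (-1) θ φ / 2 := by
  have hF (t p : ℝ) := contDiffAt_ofReal_comp (hH t p)
  have hDF := ((hF θ φ).fderiv_right (m := 1) (by norm_num)).differentiableAt one_ne_zero
  have ethbarH_eq (t p : ℝ) (ht : Real.sin t ≠ 0) :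
      ethbarH H t p = (Real.sqrt 2 : ℂ)⁻¹ * spinGrad (fun v => (H v : ℂ)) (-1) t p :=
    ethbar_zero_comp_sphL (F := fun v => (H v : ℂ)) ((hF t p).differentiableAt two_ne_zero) ht
  exact eth_eq_spinHess_div_two (by norm_num) hDF hθ ethbarH_eq

theorem continuous_HC (hH : ∀ θ φ, ContinuousAt H (sphL θ φ)) :
    Continuous fun x : ℝ × ℝ => HC H x.1 x.2 :=
  continuous_ofReal.comp <| continuous_iff_continuousAt.2 fun x =>
    (hH x.1 x.2).tendsto.comp (continuous_sphL.tendsto x)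

theorem continuous_HC_add_ethethbarH_re_mul_sin (hH : ∀ θ φ, ContDiffAt ℝ 2 H (sphL θ φ)) :
    Continuous fun x : ℝ × ℝ =>
      (HC H x.1 x.2 + ethethbarH H x.1 x.2).re * Real.sin x.1 := by
  have hHC := continuous_HC fun θ φ => (hH θ φ).continuousAt
  have h_hess := continuous_spinHess fun θ φ => contDiffAt_ofReal_comp (hH θ φ)
  refine continuous_mul_of_eq_of_ne_zero (g := fun x =>
      (HC H x.1 x.2 + spinHess (fun v => (H v : ℂ)) (-1) x.1 x.2 / 2).re) ?_ (by fun_prop) ?_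
  · exact continuous_re.comp (hHC.add ((h_hess (-1)).div_const 2))
  · intro x hx
    rw [ethethbarH_eq_spinHess_div_two hH hx]

theorem continuous_Jfun_mul_sin (hH : ∀ θ φ, ContDiffAt ℝ 2 H (sphL θ φ)) :
    Continuous fun x : ℝ × ℝ => Jfun H x.1 x.2 * Real.sin x.1 := by
  have hHC := continuous_HC fun θ φ => (hH θ φ).continuousAt
  have h_hess := continuous_spinHess fun θ φ => contDiffAt_ofReal_comp (hH θ φ)
  refine continuous_mul_of_eq_of_ne_zero (g := fun x =>
      ((HC H x.1 x.2 + spinHess (fun v => (H v : ℂ)) (-1) x.1 x.2 / 2) ^ 2 -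
        spinHess (fun v => (H v : ℂ)) 1 x.1 x.2 / 2 *
          conj (spinHess (fun v => (H v : ℂ)) 1 x.1 x.2 / 2)).re) ?_ (by fun_prop) ?_
  · exact continuous_re.comp (((hHC.add ((h_hess (-1)).div_const 2)).pow 2).sub
      (((h_hess 1).div_const 2).mul (continuous_conj.comp ((h_hess 1).div_const 2))))
  · intro x hx
    rw [Jfun, ethbar2H_eq_conj_eth2H, eth2H_eq_spinHess_div_two hH hx,
      ethethbarH_eq_spinHess_div_two hH hx]

theorem re_HC_add_sq_sub_eq_quadratic (H : (Fin 3 → ℝ) → ℝ) (s θ φ : ℝ) :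
    ((HC H θ φ + s + ethethbarH H θ φ) ^ 2 - eth2H H θ φ * ethbar2H H θ φ).re =
      Jfun H θ φ + 2 * s * (HC H θ φ + ethethbarH H θ φ).re + s ^ 2 := by
  simp only [Jfun, pow_two, add_re, sub_re, mul_re, add_im, ofReal_re, ofReal_im]
  ring

theorem Asteiner_zero (H : (Fin 3 → ℝ) → ℝ) :
    Asteiner H 0 = ∫ φ in (0 : ℝ)..(2 * Real.pi), ∫ θ in (0 : ℝ)..Real.pi,
      Jfun H θ φ * Real.sin θ := by
  simp only [Asteiner, Jfun, ofReal_zero, add_zero]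

theorem Asteiner_eq_quadratic (hH : ∀ θ φ, ContDiffAt ℝ 2 H (sphL θ φ)) (s : ℝ) :
    Asteiner H s = Asteiner H 0 + 2 * s * Msteiner H + 4 * Real.pi * s ^ 2 := by
  have hJ : Continuous (Function.uncurry fun φ θ => Jfun H θ φ * Real.sin θ) :=
    ((continuous_Jfun_mul_sin hH).comp continuous_swap :)
  have hM : Continuous (Function.uncurry fun φ θ =>
      2 * s * ((HC H θ φ + ethethbarH H θ φ).re * Real.sin θ)) :=
    (((continuous_HC_add_ethethbarH_re_mul_sin hH).comp continuous_swap).const_mul (2 * s) :)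
  have h_sin : Continuous (Function.uncurry fun _ θ : ℝ => s ^ 2 * Real.sin θ) := by
    fun_prop
  calc Asteiner H s
    _ = ∫ φ in (0 : ℝ)..(2 * Real.pi), ∫ θ in (0 : ℝ)..Real.pi,
          (Jfun H θ φ * Real.sin θ +
            2 * s * ((HC H θ φ + ethethbarH H θ φ).re * Real.sin θ) + s ^ 2 * Real.sin θ) := by
      simp only [Asteiner, re_HC_add_sq_sub_eq_quadratic, add_mul, mul_assoc]
    _ = Asteiner H 0 + 2 * s * Msteiner H + s ^ 2 * (4 * Real.pi) := by
      rw [integral_integral_add_of_continuous ?_ h_sin,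
        integral_integral_add_of_continuous hJ hM, Asteiner_zero, Msteiner,
        ← integral_integral_sin]
      · simp only [intervalIntegral.integral_const_mul]
      · exact hJ.add hM
    _ = Asteiner H 0 + 2 * s * Msteiner H + 4 * Real.pi * s ^ 2 := by ring

end Stutzfunction

theorem stmt4_general {H : (Fin 3 → ℝ) → ℝ} (hH : ∀ θ φ, ContDiffAt ℝ 2 H (sphL θ φ)) :
    (∀ s : ℝ, Asteiner H s = Asteiner H 0 + 2 * s * Msteiner H + 4 * Real.pi * s ^ 2) ∧
    (∀ V₀ : ℝ, ∀ s : ℝ, V₀ + (∫ u in (0:ℝ)..s, Asteiner H u) =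
      V₀ + s * Asteiner H 0 + s ^ 2 * Msteiner H + (4 / 3) * Real.pi * s ^ 3) := by
  refine ⟨Asteiner_eq_quadratic hH, fun V₀ s => ?_⟩
  have area_eq (u : ℝ) :
      Asteiner H u = Asteiner H 0 + 2 * Msteiner H * u + 4 * Real.pi * u ^ 2 := by
    rw [Asteiner_eq_quadratic hH]
    ring
  rw [intervalIntegral.integral_congr fun u _ => area_eq u, integral_quadratic]
  ring

/-- Steiner's theorem: `A(s) = A + 2sM + 4πs²` and
`V(s) = V₀ + ∫₀^s A(u) du = V₀ + sA + s²M + (4/3)πs³`. -/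
theorem stmt4 (H : (Fin 3 → ℝ) → ℝ)
    (hH : ContDiffOn ℝ (⊤ : ℕ∞) H {v : Fin 3 → ℝ | v ≠ 0})
    (hhom : ∀ v : Fin 3 → ℝ, v ≠ 0 → ∀ t : ℝ, 0 < t → H (t • v) = H v) :
    (∀ s : ℝ, Asteiner H s = Asteiner H 0 + 2 * s * Msteiner H + 4 * Real.pi * s ^ 2) ∧
    (∀ V₀ : ℝ, ∀ s : ℝ, V₀ + (∫ u in (0:ℝ)..s, Asteiner H u) =
      V₀ + s * Asteiner H 0 + s ^ 2 * Msteiner H + (4 / 3) * Real.pi * s ^ 3) :=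
  stmt4_general fun θ φ => (hH.contDiffAt (isOpen_ne.mem_nhds (sphL_ne_zero θ φ))).of_le
    ENat.LEInfty.out
end
end

section
/- (The cut function is minus the stutzfunction.) Let H : ℝ³∖{0} → ℝ be smooth and homogeneous of degree 0 with H(θ,φ) := H(ℓ(θ,φ)), and let x(θ,φ) := H ℓ + (ð̄H) m + (ðH) conj(m) ∈ ℝ³ be the surface with stutzfunction H. Then for every θ ∈ (0,π) and φ: lim_{r → ∞} (r − ‖x(θ,φ) + r·ℓ(θ,φ)‖) = −H(θ,φ). That is, the outgoing null geodesic from the point (0, x(θ,φ)) of the surface in its outward null normal direction (1, ℓ(θ,φ)) meets future null infinity at retarded time u = −H(θ,φ), so the cut of null infinity generated by the boundary of the future of the surface has cut function equal to minus the stutzfunction. -/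
noncomputable section

/-! Writing `‖x + r ℓ‖ = r ‖ℓ + r⁻¹ x‖` shows that `‖x + r ℓ‖ - r ‖ℓ‖` is `r` times the increment
of the norm from `ℓ` to `ℓ + r⁻¹ x`, so it tends to the derivative of the norm at `ℓ` in the
direction `x`, which is `⟪ℓ, x⟫` for a unit vector `ℓ`. Since `m` is orthogonal to `ℓ`, the terms
along `m` and `conj m` do not contribute to this inner product, whatever their coefficients. -/

open Filter Topology
open scoped InnerProductSpace ComplexConjugate

section NormAlongRay

theorem tendsto_mul_norm_sub_norm_add_smul {E : Type*} [NormedAddCommGroup E] [NormedSpace ℝ E]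
    {l x : E} {d : ℝ} (hd : HasLineDerivAt ℝ norm d l x) :
    Tendsto (fun r : ℝ => r * ‖l‖ - ‖x + r • l‖) atTop (𝓝 (-d)) := by
  have increment_tendsto : Tendsto (fun r : ℝ => r * (‖l + r⁻¹ • x‖ - ‖l‖)) atTop (𝓝 d) := by
    simpa [Function.comp_def] using hd.tendsto_slope_zero_right.comp tendsto_inv_atTop_nhdsGT_zero
  refine increment_tendsto.neg.congr' ?_
  filter_upwards [eventually_gt_atTop 0] with r hr
  have norm_rescale : ‖x + r • l‖ = r * ‖l + r⁻¹ • x‖ := by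
    rw [← norm_smul_of_nonneg hr.le, smul_add, smul_inv_smul₀ hr.ne', add_comm]
  rw [norm_rescale]
  ring

variable {E : Type*} [NormedAddCommGroup E] [InnerProductSpace ℝ E] {l : E}

theorem hasLineDerivAt_norm (hl : l ≠ 0) (x : E) :
    HasLineDerivAt ℝ norm (⟪l, x⟫_ℝ / ‖l‖) l x := by
  have line : HasDerivAt (fun t : ℝ => l + t • x) x 0 := by
    simpa using ((hasDerivAt_id (0 : ℝ)).smul_const x).const_add l
  have sqrt_normSq := line.norm_sq.sqrt (by simpa using hl)
  simpa [HasLineDerivAt, Real.sqrt_sq, mul_div_mul_left] using sqrt_normSq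

theorem tendsto_sub_norm_add_smul_of_norm_eq_one (hl : ‖l‖ = 1) (x : E) :
    Tendsto (fun r : ℝ => r - ‖x + r • l‖) atTop (𝓝 (-⟪l, x⟫_ℝ)) := by
  have l_ne_zero : l ≠ 0 := norm_ne_zero_iff.mp (by simp [hl])
  simpa [hl] using tendsto_mul_norm_sub_norm_add_smul (hasLineDerivAt_norm l_ne_zero x)

end NormAlongRay

section EuclideanCoordinates

theorem norm3_eq_norm_toLp (v : Fin 3 → ℝ) : norm3 v = ‖WithLp.toLp 2 v‖ := by
  simp [norm3, EuclideanSpace.norm_eq, Fin.sum_univ_three]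

theorem dot3_eq_inner_toLp (u v : Fin 3 → ℝ) :
    dot3 u v = ⟪WithLp.toLp 2 u, WithLp.toLp 2 v⟫_ℝ := by
  simp [dot3, PiLp.inner_apply, mul_comm]

theorem tendsto_sub_norm3_add_mul {l : Fin 3 → ℝ} (hl : norm3 l = 1) (x : Fin 3 → ℝ) :
    Tendsto (fun r : ℝ => r - norm3 (fun i => x i + r * l i)) atTop (𝓝 (-dot3 l x)) := by
  rw [norm3_eq_norm_toLp] at hl
  simp only [norm3_eq_norm_toLp, dot3_eq_inner_toLp]
  exact tendsto_sub_norm_add_smul_of_norm_eq_one hl (WithLp.toLp 2 x)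

end EuclideanCoordinates

section NullFrame

variable (θ φ : ℝ)

theorem sum_sphL_sq : ∑ i, sphL θ φ i ^ 2 = 1 := by
  simp only [Fin.sum_univ_three, sphL, Matrix.cons_val]
  linear_combination Real.sin_sq_add_cos_sq θ + Real.sin θ ^ 2 * Real.sin_sq_add_cos_sq φ

theorem norm3_sphL : norm3 (sphL θ φ) = 1 := by
  rw [norm3, ← Fin.sum_univ_three (fun i => sphL θ φ i ^ 2), sum_sphL_sq, Real.sqrt_one]

theorem sum_sphL_mul_sphM : ∑ i, (sphL θ φ i : ℂ) * sphM θ φ i = 0 := by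
  have sin_sq_add_cos_sq : (Real.sin φ : ℂ) ^ 2 + (Real.cos φ : ℂ) ^ 2 = 1 :=
    mod_cast Real.sin_sq_add_cos_sq φ
  simp only [Fin.sum_univ_three, sphL, sphM, Matrix.cons_val, Complex.ofReal_mul]
  linear_combination (Real.sqrt 2 : ℂ)⁻¹ * Real.sin θ * Real.cos θ * sin_sq_add_cos_sq

theorem sum_sphL_mul_conj_sphM : ∑ i, (sphL θ φ i : ℂ) * conj (sphM θ φ i) = 0 := by
  simpa using congrArg conj (sum_sphL_mul_sphM θ φ)

/-- The real part of the vector `h ℓ + b m + a conj(m)`, for a real radial coefficient `h` and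
arbitrary complex coefficients `b`, `a`. The point `x(θ,φ)` of the surface with stutzfunction `H`
is the case `h = H`, `b = ð̄H`, `a = ðH`. -/
def nullFrameVector (h : ℝ) (b a : ℂ) : Fin 3 → ℝ := fun i =>
  ((h : ℂ) * sphL θ φ i + b * sphM θ φ i + a * conj (sphM θ φ i)).re

theorem dot3_sphL_nullFrameVector (h : ℝ) (b a : ℂ) :
    dot3 (sphL θ φ) (nullFrameVector θ φ h b a) = h := by
  have sum_sphL_sq_complex : ∑ i, (sphL θ φ i : ℂ) ^ 2 = 1 := mod_cast sum_sphL_sq θ φ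
  calc dot3 (sphL θ φ) (nullFrameVector θ φ h b a)
      = (∑ i, (sphL θ φ i : ℂ) *
          (h * sphL θ φ i + b * sphM θ φ i + a * conj (sphM θ φ i))).re := by
        simp only [dot3, nullFrameVector, Complex.re_sum, Complex.re_ofReal_mul]
    _ = (h * ∑ i, (sphL θ φ i : ℂ) ^ 2 + b * ∑ i, (sphL θ φ i : ℂ) * sphM θ φ i +
          a * ∑ i, (sphL θ φ i : ℂ) * conj (sphM θ φ i)).re := by
        simp only [Finset.mul_sum, ← Finset.sum_add_distrib]
        congr! 2
        ring
    _ = h := by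
        simp [sum_sphL_sq_complex, sum_sphL_mul_sphM, sum_sphL_mul_conj_sphM]

theorem stmt12_general (h : ℝ) (b a : ℂ) :
    Tendsto (fun r : ℝ => r - norm3 (fun i => nullFrameVector θ φ h b a i + r * sphL θ φ i))
      atTop (𝓝 (-h)) := by
  simpa only [dot3_sphL_nullFrameVector] using
    tendsto_sub_norm3_add_mul (norm3_sphL θ φ) (nullFrameVector θ φ h b a)

end NullFrame

/-- The cut function is minus the stutzfunction: the outgoing null geodesic from the surface
point `(0, x(θ,φ))` in the direction `(1, ℓ(θ,φ))` meets null infinity at retarded time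
`lim_{r→∞} (r − ‖x(θ,φ) + r·ℓ(θ,φ)‖) = −H(θ,φ)`. -/
theorem stmt12 (H : (Fin 3 → ℝ) → ℝ)
    (hH : ContDiffOn ℝ (⊤ : ℕ∞) H {v : Fin 3 → ℝ | v ≠ 0})
    (hhom : ∀ v : Fin 3 → ℝ, v ≠ 0 → ∀ t : ℝ, 0 < t → H (t • v) = H v) :
    ∀ θ ∈ Set.Ioo 0 Real.pi, ∀ φ : ℝ,
      Filter.Tendsto (fun r : ℝ =>
          r - norm3 (fun i => surf H θ φ i + r * sphL θ φ i))
        Filter.atTop (nhds (-(H (sphL θ φ)))) := by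
  exact fun θ _ φ => stmt12_general θ φ (H (sphL θ φ)) (ethbarH H θ φ) (ethH H θ φ)
end
end
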